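/- arXiv:1707.02887 — 2 statements merged into one kernel-verified Lean document; each statement's English description precedes it below -/
import Mathlib

section
/- For all positive real numbers A, B and z₀, the double integral ∫_{-A}^{A} ∫_{-B}^{B} z₀ / (z₀² + x² + y²)^{3/2} dy dx equals 4·arctan( A·B / ( z₀·√(A² + B² + z₀²) ) ). -/
open MeasureTheory Real

/-!
The integrand is the density of the solid angle seen from `(0, 0, z)`, and it is the mixed
derivative `∂²/∂x∂y` of `arctan (x y / (z √(z² + x² + y²)))`. The integral over any rectangle is
therefore the alternating sum of this arctangent over the four corners; since the arctangent is odd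
in each coordinate, the four terms coincide for a centered rectangle.
-/

section MixedPrimitive

open Set

variable {E : Type*} [NormedAddCommGroup E] [NormedSpace ℝ E] [CompleteSpace E]

theorem integral_integral_eq_sub_of_hasDerivAt {F G f : ℝ → ℝ → E} {a b c d : ℝ}
    (hF : ∀ x ∈ uIcc a b, ∀ y ∈ uIcc c d, HasDerivAt (fun t => F t y) (G x y) x)
    (hG : ∀ x ∈ uIcc a b, ∀ y ∈ uIcc c d, HasDerivAt (G x) (f x y) y)
    (hG_int : ∀ y ∈ uIcc c d, IntervalIntegrable (fun x => G x y) volume a b)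
    (hf_int : ∀ x ∈ uIcc a b, IntervalIntegrable (f x) volume c d) :
    ∫ x in a..b, ∫ y in c..d, f x y = (F b d - F a d) - (F b c - F a c) := by
  have integral_left {y : ℝ} (hy : y ∈ uIcc c d) : ∫ x in a..b, G x y = F b y - F a y :=
    intervalIntegral.integral_eq_sub_of_hasDerivAt (fun x hx => hF x hx y hy) (hG_int y hy)
  calc
    ∫ x in a..b, ∫ y in c..d, f x y = ∫ x in a..b, (G x d - G x c) :=
      intervalIntegral.integral_congr fun x hx =>
        intervalIntegral.integral_eq_sub_of_hasDerivAt (hG x hx) (hf_int x hx)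
    _ = (∫ x in a..b, G x d) - ∫ x in a..b, G x c :=
      intervalIntegral.integral_sub (hG_int d right_mem_uIcc) (hG_int c left_mem_uIcc)
    _ = (F b d - F a d) - (F b c - F a c) := by
      rw [integral_left right_mem_uIcc, integral_left left_mem_uIcc]

end MixedPrimitive

theorem hasDerivAt_div_sqrt_add_sq {p t : ℝ} (h : 0 < p + t ^ 2) :
    HasDerivAt (fun t => t / √(p + t ^ 2)) (p / √(p + t ^ 2) ^ 3) t := by
  have sqrt_pos : 0 < √(p + t ^ 2) := Real.sqrt_pos.mpr h
  have sq_sqrt : √(p + t ^ 2) ^ 2 = p + t ^ 2 := Real.sq_sqrt h.le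
  have deriv_radicand : HasDerivAt (fun t => p + t ^ 2) (2 * t) t := by
    simpa using (hasDerivAt_pow 2 t).const_add p
  refine ((hasDerivAt_id' t).fun_div (deriv_radicand.sqrt h.ne') sqrt_pos.ne').congr_deriv ?_
  field_simp
  rw [sq_sqrt]
  ring

theorem rpow_three_div_two_eq_sqrt_pow {p : ℝ} (hp : 0 ≤ p) : p ^ ((3 : ℝ) / 2) = √p ^ 3 := by
  rw [rpow_div_two_eq_sqrt 3 hp]
  exact rpow_natCast (√p) 3

/-- The signed solid angle subtended at `(0, 0, z)` by the rectangle in the plane of height `0`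
with opposite corners `(0, 0)` and `(x, y)`. -/
noncomputable def cornerSolidAngle (z x y : ℝ) : ℝ :=
  arctan (x * y / (z * √(z ^ 2 + x ^ 2 + y ^ 2)))

namespace cornerSolidAngle

theorem neg_left (z x y : ℝ) : cornerSolidAngle z (-x) y = -cornerSolidAngle z x y := by
  simp only [cornerSolidAngle, neg_sq, neg_mul, neg_div, arctan_neg]

theorem neg_right (z x y : ℝ) : cornerSolidAngle z x (-y) = -cornerSolidAngle z x y := by
  simp only [cornerSolidAngle, neg_sq, mul_neg, neg_div, arctan_neg]

variable {z : ℝ}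

theorem hasDerivAt_left (hz : z ≠ 0) (x y : ℝ) :
    HasDerivAt (fun t => cornerSolidAngle z t y)
      (z * y / ((z ^ 2 + x ^ 2) * √(z ^ 2 + x ^ 2 + y ^ 2))) x := by
  have radicand_comm (t : ℝ) : z ^ 2 + t ^ 2 + y ^ 2 = z ^ 2 + y ^ 2 + t ^ 2 := add_right_comm ..
  have eq_arctan : (fun t => cornerSolidAngle z t y) =
      fun t => arctan (y / z * (t / √(z ^ 2 + y ^ 2 + t ^ 2))) := by
    funext t
    rw [cornerSolidAngle, radicand_comm, div_mul_div_comm, mul_comm t y]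
  have radicand_pos : 0 < z ^ 2 + y ^ 2 + x ^ 2 := by positivity
  rw [eq_arctan, radicand_comm]
  refine ((hasDerivAt_div_sqrt_add_sq radicand_pos).const_mul (y / z)).arctan.congr_deriv ?_
  have sq_sqrt := Real.sq_sqrt radicand_pos.le
  have sqrt_pos := Real.sqrt_pos.mpr radicand_pos
  set s := √(z ^ 2 + y ^ 2 + x ^ 2)
  have one_add_sq : 1 + (y / z * (x / s)) ^ 2 =
      (z ^ 2 + x ^ 2) * (z ^ 2 + y ^ 2) / (z ^ 2 * s ^ 2) := by
    field_simp
    rw [sq_sqrt]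
    ring
  rw [one_add_sq]
  field_simp

theorem hasDerivAt_deriv_left (hz : z ≠ 0) (x y : ℝ) :
    HasDerivAt (fun t => z * t / ((z ^ 2 + x ^ 2) * √(z ^ 2 + x ^ 2 + t ^ 2)))
      (z / (z ^ 2 + x ^ 2 + y ^ 2) ^ ((3 : ℝ) / 2)) y := by
  have radicand_pos : 0 < z ^ 2 + x ^ 2 + y ^ 2 := by positivity
  simp only [mul_div_mul_comm]
  refine ((hasDerivAt_div_sqrt_add_sq radicand_pos).const_mul _).congr_deriv ?_
  rw [rpow_three_div_two_eq_sqrt_pow radicand_pos.le]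
  field_simp

end cornerSolidAngle

theorem lis_rectangular_array_gain_general {z : ℝ} (hz : z ≠ 0) (a b c d : ℝ) :
    ∫ x in a..b, ∫ y in c..d, z / (z ^ 2 + x ^ 2 + y ^ 2) ^ ((3 : ℝ) / 2) =
      (cornerSolidAngle z b d - cornerSolidAngle z a d) -
        (cornerSolidAngle z b c - cornerSolidAngle z a c) := by
  apply integral_integral_eq_sub_of_hasDerivAt
    (fun x _ y _ => cornerSolidAngle.hasDerivAt_left hz x y)
    (fun x _ y _ => cornerSolidAngle.hasDerivAt_deriv_left hz x y)
  · intro y _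
    exact (continuous_const.div (by fun_prop) fun x => by positivity).intervalIntegrable a b
  · intro x _
    have continuous_rpow : Continuous fun y => (z ^ 2 + x ^ 2 + y ^ 2) ^ ((3 : ℝ) / 2) :=
      Continuous.rpow_const (by fun_prop) fun _ => Or.inr (by norm_num)
    exact (continuous_const.div continuous_rpow fun y => by positivity).intervalIntegrable c d

/-- For all positive real numbers `A`, `B`, `z₀`, the double integral
`∫_{-A}^{A} ∫_{-B}^{B} z₀ / (z₀² + x² + y²)^{3/2} dy dx` equals
`4 · arctan(A·B / (z₀·√(A² + B² + z₀²)))`. -/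
theorem lis_rectangular_array_gain (A B z₀ : ℝ) (hA : 0 < A) (hB : 0 < B) (hz : 0 < z₀) :
    (∫ x in (-A)..A, ∫ y in (-B)..B, z₀ / (z₀ ^ 2 + x ^ 2 + y ^ 2) ^ ((3 : ℝ) / 2)) =
      4 * Real.arctan (A * B / (z₀ * Real.sqrt (A ^ 2 + B ^ 2 + z₀ ^ 2))) := by
  rw [lis_rectangular_array_gain_general hz.ne', ← add_rotate (z₀ ^ 2), ← cornerSolidAngle]
  simp only [cornerSolidAngle.neg_left, cornerSolidAngle.neg_right]
  ring
end

section
/- Let θ > 0, β = ⌊1/θ⌋ and α = 1/θ − β, and let sinc denote the normalized sinc function, sinc(x) = sin(πx)/(πx) for x ≠ 0 and sinc(0) = 1. Then Σ_{ℓ∈ℤ} sinc(ℓ/θ)² = θ²·(β² + 2αβ + α). In particular, the interference power with matched filtering, I = ζP·Σ_{ℓ≠0} sinc(ℓ/θ)², equals ζP·(θ²(β² + 2αβ + α) − 1), and I = 0 whenever 1/θ is an integer. -/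
/-!
Away from `ℓ = 0` the summand is `θ² sin²(πℓ/θ) / (πℓ)²`, and `sin²(πℓ/θ)` depends only on the
fractional part `α` of `1/θ`. Writing `sin² = (1 - cos(2·))/2` turns the sum over `ℓ ≥ 1` into the
difference of `ζ(2)` and the Fourier cosine series of the Bernoulli polynomial `B₂`, both evaluated
in closed form on `[0, 1]`. The terms with `ℓ ≠ 0` therefore sum to `θ² α(1 - α)`, and the stated
form in `α` and `β = ⌊1/θ⌋` comes from `θ² (β + α)² = 1`.
-/

open MeasureTheory Real

lemma hasSum_nat_sin_sq_div_sq {x : ℝ} (hx : x ∈ Set.Icc (0 : ℝ) 1) :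
    HasSum (fun n : ℕ => sin (π * n * x) ^ 2 / (n : ℝ) ^ 2) (π ^ 2 / 2 * (x * (1 - x))) := by
  have hcos : HasSum (fun n : ℕ => 1 / (n : ℝ) ^ 2 * cos (2 * π * n * x))
      (π ^ 2 * (x ^ 2 - x + 6⁻¹)) := by
    convert! hasSum_one_div_nat_pow_mul_cos one_ne_zero hx using 1
    have hB : (Polynomial.map (algebraMap ℚ ℝ) (Polynomial.bernoulli (2 * 1))).eval x =
        x ^ 2 - x + 6⁻¹ := bernoulliFun_two x
    rw [hB, mul_one, Nat.factorial_two]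
    push_cast
    ring
  convert! (hasSum_zeta_two.sub hcos).mul_left (1 / 2) using 1
  · ext n
    rw [sin_sq_eq_half_sub, show 2 * (π * n * x) = 2 * π * n * x by ring]
    ring
  · ring

lemma sin_pi_mul_int_mul_fract_sq (n : ℤ) (x : ℝ) :
    sin (π * n * Int.fract x) ^ 2 = sin (π * n * x) ^ 2 := by
  have hshift : π * n * Int.fract x = π * n * x - (n * ⌊x⌋ : ℤ) * π := by
    rw [Int.fract]
    push_cast
    ring
  rw [← sq_abs, hshift, sin_sub_int_mul_pi, abs_mul, abs_neg_one_zpow, one_mul, sq_abs]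

-- The term at `n = 0` is `0 / 0 = 0`, so this is the sum over nonzero integers.
lemma hasSum_int_sin_sq_div_sq (x : ℝ) :
    HasSum (fun n : ℤ => sin (π * n * x) ^ 2 / (n : ℝ) ^ 2)
      (π ^ 2 * (Int.fract x * (1 - Int.fract x))) := by
  simp only [← sin_pi_mul_int_mul_fract_sq _ x]
  have hnat := hasSum_nat_sin_sq_div_sq (x := Int.fract x)
    ⟨Int.fract_nonneg x, (Int.fract_lt_one x).le⟩
  convert! HasSum.of_nat_of_neg
    (f := fun n : ℤ => sin (π * n * Int.fract x) ^ 2 / (n : ℝ) ^ 2)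
    (by simpa using hnat) (by simpa using hnat) using 1
  simp only [Int.cast_zero, zero_pow two_ne_zero, div_zero, sub_zero]
  ring

lemma hasSum_int_ne_zero_sinc_sq {θ : ℝ} (hθ : θ ≠ 0) :
    HasSum (fun n : {n : ℤ // n ≠ 0} => sinc (π * (n / θ)) ^ 2)
      (θ ^ 2 * (Int.fract (1 / θ) * (1 - Int.fract (1 / θ)))) := by
  have hsin : HasSum
      (fun n : {n : ℤ // n ≠ 0} => sin (π * n * (1 / θ)) ^ 2 / ((n : ℤ) : ℝ) ^ 2)
      (π ^ 2 * (Int.fract (1 / θ) * (1 - Int.fract (1 / θ)))) := by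
    refine (hasSum_subtype_iff_of_support_subset (s := {n : ℤ | n ≠ 0}) ?_).mpr
      (hasSum_int_sin_sq_div_sq (1 / θ))
    rintro n hn rfl
    simp at hn
  convert! hsin.mul_left (θ ^ 2 / π ^ 2) using 1
  · ext ⟨n, hn⟩
    have hn' : (n : ℝ) ≠ 0 := Int.cast_ne_zero.mpr hn
    rw [sinc_of_ne_zero (mul_ne_zero pi_ne_zero (div_ne_zero hn' hθ)),
      show π * (n / θ) = π * n * (1 / θ) by ring]
    field_simp
  · field_simp

lemma hasSum_int_sinc_sq {θ : ℝ} (hθ : θ ≠ 0) :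
    HasSum (fun n : ℤ => sinc (π * (n / θ)) ^ 2)
      (1 + θ ^ 2 * (Int.fract (1 / θ) * (1 - Int.fract (1 / θ)))) := by
  have hzero : HasSum (fun n : ({0} : Set ℤ) => sinc (π * (n / θ)) ^ 2) 1 := by
    convert! hasSum_unique fun n : ({0} : Set ℤ) => sinc (π * (n / θ)) ^ 2 using 1
    simp
  exact HasSum.add_compl (f := fun n : ℤ => sinc (π * (n / θ)) ^ 2) hzero
    (hasSum_int_ne_zero_sinc_sq hθ)

lemma sq_mul_floor_fract_eq_one_add {θ : ℝ} (hθ : θ ≠ 0) :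
    θ ^ 2 * ((⌊1 / θ⌋ : ℝ) ^ 2 + 2 * Int.fract (1 / θ) * ⌊1 / θ⌋ + Int.fract (1 / θ)) =
      1 + θ ^ 2 * (Int.fract (1 / θ) * (1 - Int.fract (1 / θ))) := by
  have hsq : θ ^ 2 * (⌊1 / θ⌋ + Int.fract (1 / θ)) ^ 2 = 1 := by
    rw [Int.floor_add_fract, ← mul_pow, mul_one_div_cancel hθ, one_pow]
  linear_combination hsq

lemma eq_sinc_pi_mul {f : ℝ → ℝ} (hf0 : f 0 = 1)
    (hf : ∀ x : ℝ, x ≠ 0 → f x = sin (π * x) / (π * x)) (x : ℝ) : f x = sinc (π * x) := by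
  rcases eq_or_ne x 0 with rfl | hx
  · rw [hf0, mul_zero, sinc_zero]
  · rw [hf x hx, sinc_of_ne_zero (mul_ne_zero pi_ne_zero hx)]

/-- Property 4: with `θ > 0`, `β = ⌊1/θ⌋`, `α = 1/θ − β` and the normalized sinc function,
`Σ_{ℓ∈ℤ} sinc(ℓ/θ)² = θ²·(β² + 2αβ + α)`.  In particular the matched-filter interference
power `I = ζP·Σ_{ℓ≠0} sinc(ℓ/θ)²` equals `ζP·(θ²(β² + 2αβ + α) − 1)`, and `I = 0`
whenever `1/θ` is an integer. -/
theorem sinc_squared_sum_interference (θ : ℝ) (hθ : 0 < θ) (β : ℤ) (hβ : β = ⌊1 / θ⌋)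
    (α : ℝ) (hα : α = 1 / θ - β) (sinc : ℝ → ℝ) (hsinc0 : sinc 0 = 1)
    (hsinc : ∀ x : ℝ, x ≠ 0 → sinc x = Real.sin (π * x) / (π * x)) :
    (∑' ℓ : ℤ, (sinc ((ℓ : ℝ) / θ)) ^ 2) = θ ^ 2 * ((β : ℝ) ^ 2 + 2 * α * β + α) ∧
    ∀ ζ P : ℝ, 0 < ζ → 0 < P →
      ζ * P * (∑' ℓ : {ℓ : ℤ // ℓ ≠ 0}, (sinc (((ℓ : ℤ) : ℝ) / θ)) ^ 2) =
        ζ * P * (θ ^ 2 * ((β : ℝ) ^ 2 + 2 * α * β + α) - 1) ∧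
      ((∃ n : ℤ, 1 / θ = (n : ℝ)) →
        ζ * P * (∑' ℓ : {ℓ : ℤ // ℓ ≠ 0}, (sinc (((ℓ : ℤ) : ℝ) / θ)) ^ 2) = 0) := by
  obtain rfl : α = Int.fract (1 / θ) := by rw [hα, hβ, Int.fract]
  subst hβ
  simp only [eq_sinc_pi_mul hsinc0 hsinc]
  rw [sq_mul_floor_fract_eq_one_add hθ.ne', (hasSum_int_ne_zero_sinc_sq hθ.ne').tsum_eq]
  refine ⟨(hasSum_int_sinc_sq hθ.ne').tsum_eq, fun ζ P _ _ => ⟨by rw [add_sub_cancel_left], ?_⟩⟩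
  rintro ⟨n, hn⟩
  rw [hn, Int.fract_intCast, zero_mul, mul_zero, mul_zero]
end
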